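/- Let (E,φ) be a finitely aligned product system of graphs over ℕ^k such that s_{e_i}⁻¹(v) is infinite for every v ∈ E⁰ and every 1 ≤ i ≤ k. Let {t_λ : λ ∈ E¹} be a Toeplitz–Cuntz–Krieger E-family in a C*-algebra B with t_v ≠ 0 for every v ∈ E⁰. Then for every v ∈ E⁰ and every choice of finite sets G_m ⊆ s_{e_m}⁻¹(v) (1 ≤ m ≤ k), the element ∏_{m=1}^k (t_v − ∑_{λ∈G_m} t_λ t_λ*) of B is nonzero; in particular {t_λ} satisfies condition (†). -/

import Mathlib

open scoped Classical

noncomputable section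

namespace PSG

variable {G : Type*} [Group G] {Λ : Type*}

/-- `g ≤ h` in the left-invariant partial order induced by the submonoid `P`. -/
def qle (P : Submonoid G) (g h : G) : Prop := g⁻¹ * h ∈ P

/-- `r` is a common upper bound of `p` and `q` in `P`. -/
def IsUB (P : Submonoid G) (p q r : G) : Prop := r ∈ P ∧ qle P p r ∧ qle P q r

/-- `r` is the least common upper bound of `p` and `q` in `P`. -/
def IsLUB2 (P : Submonoid G) (p q r : G) : Prop :=
  IsUB P p q r ∧ ∀ r', IsUB P p q r' → qle P r r'

/-- `r` is the least upper bound in `P` of the set of degrees `D`. -/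
def IsLUBFam (P : Submonoid G) (D : Set G) (r : G) : Prop :=
  r ∈ P ∧ (∀ p ∈ D, qle P p r) ∧ ∀ r' ∈ P, (∀ p ∈ D, qle P p r') → qle P r r'

/-- `(G, P)` is quasi-lattice ordered: `P ∩ P⁻¹ = {1}` and every pair of elements of `P`
with a common upper bound in `P` has a least upper bound in `P`. -/
def QuasiLatticeOrdered (P : Submonoid G) : Prop :=
  (∀ g ∈ P, g⁻¹ ∈ P → g = 1) ∧
    ∀ p ∈ P, ∀ q ∈ P, (∃ r, IsUB P p q r) → ∃ r, IsLUB2 P p q r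

/-- A product system of graphs over `P`, encoded on a single edge set `Λ` (which contains the
vertices as the elements of degree `1`), with degree map `d`, source and range maps `src`, `rng`
(valued in vertices), and partial multiplication `mul` (meaningful when `rng a = src b`). -/
structure IsProductSystem (P : Submonoid G) (d : Λ → G) (src rng : Λ → Λ)
    (mul : Λ → Λ → Λ) : Prop where
  countable : Countable Λ
  d_mem : ∀ a, d a ∈ P
  d_src : ∀ a, d (src a) = 1
  d_rng : ∀ a, d (rng a) = 1
  src_vertex : ∀ v, d v = 1 → src v = v
  rng_vertex : ∀ v, d v = 1 → rng v = v
  d_mul : ∀ a b, rng a = src b → d (mul a b) = d a * d b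
  src_mul : ∀ a b, rng a = src b → src (mul a b) = src a
  rng_mul : ∀ a b, rng a = src b → rng (mul a b) = rng b
  mul_assoc' : ∀ a b c, rng a = src b → rng b = src c →
    mul (mul a b) c = mul a (mul b c)
  src_mul_self : ∀ a, mul (src a) a = a
  mul_rng_self : ∀ a, mul a (rng a) = a
  factor : ∀ p q : G, p ∈ P → q ∈ P → ∀ c, d c = p * q →
    ∃! ab : Λ × Λ, d ab.1 = p ∧ d ab.2 = q ∧ rng ab.1 = src ab.2 ∧ mul ab.1 ab.2 = c

/-- `a` is an initial segment of `c`: `c = a • b` for some (necessarily unique) `b`. -/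
def IsInit (src rng : Λ → Λ) (mul : Λ → Λ → Λ) (a c : Λ) : Prop :=
  ∃ b, rng a = src b ∧ mul a b = c

/-- The set of minimal common extensions of `μ` and `ν`. -/
def MCE (P : Submonoid G) (d : Λ → G) (src rng : Λ → Λ) (mul : Λ → Λ → Λ)
    (μ ν : Λ) : Set Λ :=
  {γ | IsInit src rng mul μ γ ∧ IsInit src rng mul ν γ ∧ IsLUB2 P (d μ) (d ν) (d γ)}

/-- The product system is finitely aligned. -/
def FinitelyAligned (P : Submonoid G) (d : Λ → G) (src rng : Λ → Λ)
    (mul : Λ → Λ → Λ) : Prop :=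
  ∀ μ ν : Λ, (MCE P d src rng mul μ ν).Finite

/-- The set of minimal common extensions of a set `S` of edges. -/
def MCEset (P : Submonoid G) (d : Λ → G) (src rng : Λ → Λ) (mul : Λ → Λ → Λ)
    (S : Set Λ) : Set Λ :=
  {γ | (∀ α ∈ S, IsInit src rng mul α γ) ∧ IsLUBFam P (d '' S) (d γ)}

/-- `∨F`: the union of `MCE(S)` over the nonempty subsets `S ⊆ F`. -/
def vee (P : Submonoid G) (d : Λ → G) (src rng : Λ → Λ) (mul : Λ → Λ → Λ)
    (F : Finset Λ) : Set Λ :=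
  {γ | ∃ S : Finset Λ, S.Nonempty ∧ S ⊆ F ∧ γ ∈ MCEset P d src rng mul ↑S}

/-- Given that `a` is an initial segment of `c`, the (unique) complementary segment;
junk value `c` otherwise. -/
def tail (src rng : Λ → Λ) (mul : Λ → Λ → Λ) (a c : Λ) : Λ :=
  if h : IsInit src rng mul a c then h.choose else c

section CstarFamilies

variable (P : Submonoid G) (d : Λ → G) (src rng : Λ → Λ) (mul : Λ → Λ → Λ)
variable {B : Type*} [CStarAlgebra B] [PartialOrder B] [StarOrderedRing B]

/-- A Toeplitz `E`-family in a C*-algebra `B` (conditions (1)–(4)). -/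
structure IsToeplitzFamily (t : Λ → B) : Prop where
  vertex_sa : ∀ v, d v = 1 → IsSelfAdjoint (t v)
  vertex_idem : ∀ v, d v = 1 → t v * t v = t v
  vertex_orth : ∀ v w, d v = 1 → d w = 1 → v ≠ w → t v * t w = 0
  mul_eq : ∀ a b, rng a = src b → t a * t b = t (mul a b)
  star_mul_self : ∀ a, star (t a) * t a = t (rng a)
  dom : ∀ p : G, p ∈ P → p ≠ 1 → ∀ v, d v = 1 → ∀ F : Finset Λ,
    (∀ a ∈ F, d a = p ∧ src a = v) → (∑ a ∈ F, t a * star (t a)) ≤ t v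

/-- The Nica-covariance/Cuntz–Krieger relation (5):
`tμ* tν = ∑_{γ = μα = νβ ∈ MCE(μ,ν)} tα tβ*`. -/
def TCKrel (t : Λ → B) : Prop :=
  ∀ μ ν : Λ, ∀ M : Finset Λ, ↑M = MCE P d src rng mul μ ν →
    star (t μ) * t ν =
      ∑ γ ∈ M, t (tail src rng mul μ γ) * star (t (tail src rng mul ν γ))

/-- A Toeplitz–Cuntz–Krieger `E`-family: conditions (1)–(5). -/
def IsTCKFamily (t : Λ → B) : Prop :=
  IsToeplitzFamily P d src rng mul t ∧ TCKrel P d src rng mul t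

/-- Condition (†): for every finite `R ⊆ P∖{1}`, every vertex `v`, and all finite sets
`F_p ⊆ s_p⁻¹(v)` (`p ∈ R`), the product `∏_{p ∈ R} (t_v − ∑_{a ∈ F_p} t_a t_a*)` is nonzero.
(The factors commute, so the product is stated for an arbitrary enumeration of `R`.) -/
def Dagger (t : Λ → B) : Prop :=
  ∀ R : List G, R.Nodup → (∀ p ∈ R, p ∈ P ∧ p ≠ 1) →
    ∀ v, d v = 1 → ∀ Fp : G → Finset Λ,
      (∀ p ∈ R, ∀ a ∈ Fp p, d a = p ∧ src a = v) →
        (R.map fun p => t v - ∑ a ∈ Fp p, t a * star (t a)).prod ≠ 0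

/-- The projection `Q^{∨F}_l = t_l t_l* ∏_{l α ∈ ∨F, d α ≠ 1} (t_{s(l)} − t_{lα} t_{lα}*)`.
(The factors commute, so the product is computed over an arbitrary enumeration.) -/
def Qproj (t : Λ → B) (F : Finset Λ) (l : Λ) : B :=
  if h : {α : Λ | d α ≠ 1 ∧ rng l = src α ∧ mul l α ∈ vee P d src rng mul F}.Finite then
    t l * star (t l) *
      (h.toFinset.toList.map fun α =>
        t (src l) - t (mul l α) * star (t (mul l α))).prod
  else 0

end CstarFamilies

/-- The positive cone `ℕ^k` inside `ℤ^k` (written multiplicatively). -/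
def posCone (k : ℕ) : Submonoid (Multiplicative (Fin k → ℤ)) where
  carrier := {g | ∀ i, 0 ≤ Multiplicative.toAdd g i}
  mul_mem' := by
    intro a b ha hb i
    simpa using add_nonneg (ha i) (hb i)
  one_mem' := by
    intro i
    simp

/-- The `i`-th standard generator of `ℕ^k ⊆ ℤ^k`. -/
def egen (k : ℕ) (i : Fin k) : Multiplicative (Fin k → ℤ) :=
  Multiplicative.ofAdd (Pi.single i 1)

end PSG
namespace PSG

/-!
The product is nonzero as soon as it fixes some `t_μ` on the left, because
`t_μ* t_μ = t_{r(μ)} ≠ 0`. By relation (5), each factor fixes `t_μ` if `μ` starts at `v` and has no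
common extension with any of the finitely many edges in play.

Such a `μ` is built one coordinate at a time. Suppose `d(μ)_i = 0`, so that
`d(μ) ∨ e_i = d(μ) + e_i`. If `d(a)_i ≠ 0` and an extension `μν` with `d(ν) = e_i` has a common
extension with `a`, then `μν` lies in `MCE(μ, a(0, e_i))`. This set is finite by finite alignment,
whereas there are infinitely many choices of `ν`; so some `μν` has no common extension with any
given edge `a` such that `d(a)_i ≠ 0`.
-/

section Extensions

variable {G : Type*} [Group G] {P : Submonoid G} {Λ : Type*} {d : Λ → G} {src rng : Λ → Λ}
  {mul : Λ → Λ → Λ}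

/-- `μ` and `ν` are compatible if they have a common extension, not necessarily a minimal one.
For incompatible edges, relation (5) gives `t_μ* t_ν = 0`. -/
def Compatible (src rng : Λ → Λ) (mul : Λ → Λ → Λ) (μ ν : Λ) : Prop :=
  ∃ γ, IsInit src rng mul μ γ ∧ IsInit src rng mul ν γ

theorem MCE_eq_empty_of_not_compatible {μ ν : Λ} (h : ¬ Compatible src rng mul μ ν) :
    MCE P d src rng mul μ ν = ∅ :=
  Set.eq_empty_of_forall_notMem fun γ hγ => h ⟨γ, hγ.1, hγ.2.1⟩

namespace IsProductSystem

theorem eq_and_eq_of_mul_eq_mul (hPS : IsProductSystem P d src rng mul) {a b a' b' : Λ}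
    (hd : d a = d a') (hab : rng a = src b) (hab' : rng a' = src b')
    (h : mul a b = mul a' b') : a = a' ∧ b = b' := by
  have hdb : d b = d b' := by
    have hmul : d a * d b = d a' * d b' := by
      rw [← hPS.d_mul _ _ hab, ← hPS.d_mul _ _ hab', h]
    exact mul_left_cancel (hd ▸ hmul)
  have hpair : (a, b) = (a', b') :=
    (hPS.factor _ _ (hPS.d_mem a) (hPS.d_mem b) _ (hPS.d_mul _ _ hab)).unique
      ⟨rfl, rfl, hab, rfl⟩ ⟨hd.symm, hdb.symm, hab', h.symm⟩
  exact Prod.mk.inj hpair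

theorem isInit_trans (hPS : IsProductSystem P d src rng mul) {a b c : Λ}
    (hab : IsInit src rng mul a b) (hbc : IsInit src rng mul b c) : IsInit src rng mul a c := by
  obtain ⟨x, hx, rfl⟩ := hab
  obtain ⟨y, hy, rfl⟩ := hbc
  rw [hPS.rng_mul _ _ hx] at hy
  exact ⟨mul x y, by rw [hPS.src_mul _ _ hy, hx], (hPS.mul_assoc' _ _ _ hx hy).symm⟩

theorem eq_of_isInit (hPS : IsProductSystem P d src rng mul) {a a' c : Λ} (hd : d a = d a')
    (ha : IsInit src rng mul a c) (ha' : IsInit src rng mul a' c) : a = a' := by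
  obtain ⟨x, hx, rfl⟩ := ha
  obtain ⟨y, hy, h⟩ := ha'
  exact (hPS.eq_and_eq_of_mul_eq_mul hd hx hy h.symm).1

theorem exists_isInit_of_qle (hPS : IsProductSystem P d src rng mul) {q : G} (hq : q ∈ P)
    {c : Λ} (hqc : qle P q (d c)) : ∃ a, d a = q ∧ IsInit src rng mul a c := by
  obtain ⟨⟨a, b⟩, ⟨ha, -, hab, hc⟩, -⟩ :=
    hPS.factor q _ hq hqc c (mul_inv_cancel_left q (d c)).symm
  exact ⟨a, ha, b, hab, hc⟩

theorem compatible_of_isInit_right (hPS : IsProductSystem P d src rng mul) {a μ μ' : Λ}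
    (hμ : IsInit src rng mul μ μ') (h : Compatible src rng mul a μ') :
    Compatible src rng mul a μ := by
  obtain ⟨γ, haγ, hμγ⟩ := h
  exact ⟨γ, haγ, hPS.isInit_trans hμ hμγ⟩

theorem finite_setOf_compatible_mul (hPS : IsProductSystem P d src rng mul)
    (hFA : FinitelyAligned P d src rng mul) {μ a : Λ} {q q' : G} (hq : q ∈ P)
    (hlub : IsLUB2 P (d μ) q (d μ * q')) (hqa : qle P q (d a)) :
    {ν | (d ν = q' ∧ src ν = rng μ) ∧ Compatible src rng mul a (mul μ ν)}.Finite := by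
  obtain ⟨b, hdb, hba⟩ := hPS.exists_isInit_of_qle hq hqa
  refine Set.Finite.of_injOn (f := mul μ) (t := MCE P d src rng mul μ b) ?_ ?_ (hFA μ b)
  · rintro ν ⟨⟨hdν, hν⟩, γ, haγ, hμνγ⟩
    have hdeg : d (mul μ ν) = d μ * q' := by rw [hPS.d_mul _ _ hν.symm, hdν]
    obtain ⟨b', hdb', hb'⟩ := hPS.exists_isInit_of_qle hq (hdeg ▸ hlub.1.2.2)
    obtain rfl : b' = b := hPS.eq_of_isInit (hdb'.trans hdb.symm)
      (hPS.isInit_trans hb' hμνγ) (hPS.isInit_trans hba haγ)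
    exact ⟨⟨ν, hν.symm, rfl⟩, hb', by rwa [hdeg, hdb]⟩
  · rintro ν ⟨⟨-, hν⟩, -⟩ ν' ⟨⟨-, hν'⟩, -⟩ h
    exact (hPS.eq_and_eq_of_mul_eq_mul rfl hν.symm hν'.symm h).2

theorem exists_mul_not_compatible (hPS : IsProductSystem P d src rng mul)
    (hFA : FinitelyAligned P d src rng mul) {μ : Λ} {q q' : G} (hq : q ∈ P)
    (hlub : IsLUB2 P (d μ) q (d μ * q')) (hinf : {ν | d ν = q' ∧ src ν = rng μ}.Infinite)
    (A : Finset Λ) :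
    ∃ ν, d ν = q' ∧ src ν = rng μ ∧
      ∀ a ∈ A, qle P q (d a) → ¬ Compatible src rng mul a (mul μ ν) := by
  have hfin : (⋃ a ∈ {a ∈ A | qle P q (d a)},
      {ν | (d ν = q' ∧ src ν = rng μ) ∧ Compatible src rng mul a (mul μ ν)}).Finite :=
    Set.Finite.biUnion (Finset.finite_toSet _) fun a ha =>
      hPS.finite_setOf_compatible_mul hFA hq hlub (Finset.mem_filter.1 ha).2
  obtain ⟨ν, hν, hnot⟩ := hinf.exists_notMem_finite hfin
  exact ⟨ν, hν.1, hν.2, fun a ha hqa hcomp =>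
    hnot (Set.mem_biUnion (Finset.mem_filter.2 ⟨ha, hqa⟩) ⟨hν, hcomp⟩)⟩

end IsProductSystem

end Extensions

section PosCone

variable {k : ℕ} {g : Multiplicative (Fin k → ℤ)} {i : Fin k}

theorem qle_posCone_iff {h : Multiplicative (Fin k → ℤ)} :
    qle (posCone k) g h ↔ g.toAdd ≤ h.toAdd := by
  refine forall_congr' fun j => ?_
  rw [toAdd_mul, toAdd_inv, Pi.add_apply, Pi.neg_apply, neg_add_eq_sub, sub_nonneg]

theorem egen_mem_posCone (i : Fin k) : egen k i ∈ posCone k := by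
  change (0 : Fin k → ℤ) ≤ Pi.single i 1
  exact Pi.single_nonneg.2 zero_le_one

theorem egen_ne_one (i : Fin k) : egen k i ≠ 1 := fun h =>
  one_ne_zero (Pi.single_eq_zero_iff.1 (congrArg Multiplicative.toAdd h) : (1 : ℤ) = 0)

theorem qle_egen_iff (hg : g ∈ posCone k) : qle (posCone k) (egen k i) g ↔ g.toAdd i ≠ 0 := by
  have hgi : 0 ≤ g.toAdd i := hg i
  rw [qle_posCone_iff]
  refine ⟨fun h => ?_, fun h j => ?_⟩
  · have hi : 1 ≤ g.toAdd i := by simpa [egen] using h i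
    omega
  · by_cases hj : j = i
    · subst hj
      simp only [egen, toAdd_ofAdd, Pi.single_eq_same]
      omega
    · simpa [egen, hj] using hg j

theorem exists_qle_egen_of_ne_one (hg : g ∈ posCone k) (h1 : g ≠ 1) :
    ∃ i, qle (posCone k) (egen k i) g := by
  obtain ⟨i, hi⟩ := Function.ne_iff.1 (Multiplicative.toAdd.injective.ne h1)
  exact ⟨i, (qle_egen_iff hg).2 hi⟩

theorem isLUB2_mul_egen (hg : g ∈ posCone k) (hi : g.toAdd i = 0) :
    IsLUB2 (posCone k) g (egen k i) (g * egen k i) := by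
  refine ⟨⟨mul_mem hg (egen_mem_posCone i), ?_, ?_⟩, ?_⟩
  · simpa [qle] using egen_mem_posCone i
  · simpa [qle, mul_comm g] using hg
  · rintro r ⟨-, hgr, her⟩
    rw [qle_posCone_iff] at hgr her ⊢
    intro j
    by_cases hj : j = i
    · subst hj
      simpa [hi] using her j
    · simpa [egen, hj] using hgr j

end PosCone

namespace IsProductSystem

variable {k : ℕ} {Λ : Type*} {d : Λ → Multiplicative (Fin k → ℤ)} {src rng : Λ → Λ}
  {mul : Λ → Λ → Λ}

theorem exists_not_compatible_of_qle_egen (hPS : IsProductSystem (posCone k) d src rng mul)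
    (hFA : FinitelyAligned (posCone k) d src rng mul)
    (hinf : ∀ v, d v = 1 → ∀ i : Fin k, {a : Λ | d a = egen k i ∧ src a = v}.Infinite)
    {v : Λ} (hv : d v = 1) (A : Finset Λ) (S : Finset (Fin k)) :
    ∃ μ, src μ = v ∧ (∀ i ∉ S, (d μ).toAdd i = 0) ∧
      ∀ i ∈ S, ∀ a ∈ A, qle (posCone k) (egen k i) (d a) → ¬ Compatible src rng mul a μ := by
  induction S using Finset.induction_on with
  | empty => exact ⟨v, hPS.src_vertex v hv, by simp [hv], by simp⟩
  | insert i S hi ih =>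
    obtain ⟨μ, hsrc, hzero, havoid⟩ := ih
    obtain ⟨ν, hdν, hν, hnew⟩ := hPS.exists_mul_not_compatible hFA (egen_mem_posCone i)
      (isLUB2_mul_egen (hPS.d_mem μ) (hzero i hi)) (hinf _ (hPS.d_rng μ) i) A
    refine ⟨mul μ ν, (hPS.src_mul _ _ hν.symm).trans hsrc, fun j hj => ?_, fun j hj a ha hja => ?_⟩
    · rw [Finset.mem_insert, not_or] at hj
      simp [hPS.d_mul _ _ hν.symm, hdν, hzero j hj.2, egen, hj.1]
    · rcases Finset.mem_insert.1 hj with rfl | hjS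
      · exact hnew a ha hja
      · exact mt (hPS.compatible_of_isInit_right ⟨ν, hν.symm, rfl⟩) (havoid j hjS a ha hja)

theorem exists_not_compatible (hPS : IsProductSystem (posCone k) d src rng mul)
    (hFA : FinitelyAligned (posCone k) d src rng mul)
    (hinf : ∀ v, d v = 1 → ∀ i : Fin k, {a : Λ | d a = egen k i ∧ src a = v}.Infinite)
    {v : Λ} (hv : d v = 1) (A : Finset Λ) (hA : ∀ a ∈ A, d a ≠ 1) :
    ∃ μ, src μ = v ∧ ∀ a ∈ A, ¬ Compatible src rng mul a μ := by
  obtain ⟨μ, hsrc, -, hμ⟩ := hPS.exists_not_compatible_of_qle_egen hFA hinf hv A Finset.univ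
  refine ⟨μ, hsrc, fun a ha => ?_⟩
  obtain ⟨i, hi⟩ := exists_qle_egen_of_ne_one (hPS.d_mem a) (hA a ha)
  exact hμ i (Finset.mem_univ i) a ha hi

end IsProductSystem

namespace IsTCKFamily

section Group

variable {G : Type*} [Group G] {P : Submonoid G} {Λ : Type*} {d : Λ → G} {src rng : Λ → Λ}
  {mul : Λ → Λ → Λ} {B : Type*} [CStarAlgebra B] [PartialOrder B] {t : Λ → B}

theorem star_mul_eq_zero_of_not_compatible (hT : IsTCKFamily P d src rng mul t) {μ ν : Λ}
    (h : ¬ Compatible src rng mul μ ν) : star (t μ) * t ν = 0 := by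
  rw [hT.2 μ ν ∅ (by rw [MCE_eq_empty_of_not_compatible h, Finset.coe_empty]), Finset.sum_empty]

theorem sub_sum_mul_eq_self (hPS : IsProductSystem P d src rng mul)
    (hT : IsTCKFamily P d src rng mul t) {μ : Λ} {F : Finset Λ}
    (hF : ∀ a ∈ F, ¬ Compatible src rng mul a μ) :
    (t (src μ) - ∑ a ∈ F, t a * star (t a)) * t μ = t μ := by
  have hsrc : t (src μ) * t μ = t μ := by
    rw [hT.1.mul_eq _ _ (hPS.rng_vertex _ (hPS.d_src μ)), hPS.src_mul_self]
  have hsum : (∑ a ∈ F, t a * star (t a)) * t μ = 0 := by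
    rw [Finset.sum_mul]
    refine Finset.sum_eq_zero fun a ha => ?_
    rw [mul_assoc, hT.star_mul_eq_zero_of_not_compatible (hF a ha), mul_zero]
  rw [sub_mul, hsrc, hsum, sub_zero]

theorem ne_zero (hPS : IsProductSystem P d src rng mul) (hT : IsTCKFamily P d src rng mul t)
    (hnz : ∀ v, d v = 1 → t v ≠ 0) (μ : Λ) : t μ ≠ 0 := fun h =>
  hnz _ (hPS.d_rng μ) (by rw [← hT.1.star_mul_self, h, mul_zero])

end Group

variable {k : ℕ} {Λ : Type*} {d : Λ → Multiplicative (Fin k → ℤ)} {src rng : Λ → Λ}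
  {mul : Λ → Λ → Λ} {B : Type*} [CStarAlgebra B] [PartialOrder B] {t : Λ → B}

theorem list_prod_sub_sum_ne_zero (hPS : IsProductSystem (posCone k) d src rng mul)
    (hFA : FinitelyAligned (posCone k) d src rng mul)
    (hinf : ∀ v, d v = 1 → ∀ i : Fin k, {a : Λ | d a = egen k i ∧ src a = v}.Infinite)
    (hT : IsTCKFamily (posCone k) d src rng mul t) (hnz : ∀ v, d v = 1 → t v ≠ 0)
    {v : Λ} (hv : d v = 1) {ι : Type*} (R : List ι) (F : ι → Finset Λ)
    (hF : ∀ p ∈ R, ∀ a ∈ F p, d a ≠ 1) :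
    (R.map fun p => t v - ∑ a ∈ F p, t a * star (t a)).prod ≠ 0 := by
  obtain ⟨μ, rfl, hμ⟩ := hPS.exists_not_compatible hFA hinf hv (R.toFinset.biUnion F)
    (by simpa using fun a p hp ha => hF p hp a ha)
  have hfix : (R.map fun p => t (src μ) - ∑ a ∈ F p, t a * star (t a)).prod ∈
      MulAction.stabilizerSubmonoid B (t μ) := by
    refine list_prod_mem (List.forall_mem_map.2 fun p hp => ?_)
    exact hT.sub_sum_mul_eq_self hPS fun a ha =>
      hμ a (Finset.mem_biUnion.2 ⟨p, List.mem_toFinset.2 hp, ha⟩)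
  rw [MulAction.mem_stabilizerSubmonoid_iff, smul_eq_mul] at hfix
  exact left_ne_zero_of_mul (hfix ▸ hT.ne_zero hPS hnz μ)

end IsTCKFamily

/-- Corollary 8.5 (hypothesis verification): if every vertex receives infinitely many edges of
each degree `e_i` and all vertex projections are nonzero, then every Toeplitz–Cuntz–Krieger
`E`-family satisfies `∏_{m=1}^k (t_v − ∑_{λ∈G_m} t_λ t_λ*) ≠ 0` for all finite
`G_m ⊆ s_{e_m}⁻¹(v)`; in particular condition (†) holds. -/
theorem stmt16 {k : ℕ} {Λ : Type*}
    (d : Λ → Multiplicative (Fin k → ℤ)) (src rng : Λ → Λ) (mul : Λ → Λ → Λ)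
    (hPS : IsProductSystem (posCone k) d src rng mul)
    (hFA : FinitelyAligned (posCone k) d src rng mul)
    (hinf : ∀ v, d v = 1 → ∀ i : Fin k,
      {a : Λ | d a = egen k i ∧ src a = v}.Infinite)
    {B : Type*} [CStarAlgebra B] [PartialOrder B] [StarOrderedRing B]
    (t : Λ → B) (hT : IsTCKFamily (posCone k) d src rng mul t)
    (hnz : ∀ v, d v = 1 → t v ≠ 0) :
    (∀ v, d v = 1 → ∀ Gm : Fin k → Finset Λ,
      (∀ m : Fin k, ∀ a ∈ Gm m, d a = egen k m ∧ src a = v) →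
      (List.ofFn fun m : Fin k =>
        t v - ∑ a ∈ Gm m, t a * star (t a)).prod ≠ 0) ∧
    Dagger (posCone k) d src t := by
  refine ⟨fun v hv Gm hGm => ?_, fun R _ hR v hv Fp hFp => ?_⟩
  · rw [List.ofFn_eq_map]
    exact hT.list_prod_sub_sum_ne_zero hPS hFA hinf hnz hv _ Gm
      fun m _ a ha => (hGm m a ha).1 ▸ egen_ne_one m
  · exact hT.list_prod_sub_sum_ne_zero hPS hFA hinf hnz hv R Fp
      fun p hp a ha => (hFp p hp a ha).1 ▸ (hR p hp).2

end PSG
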